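/- Let β > 0 and let m ≥ 1 be an integer. There exists K > 0 depending only on m and β such that for all integers n ≥ 1 and all 1 ≤ a < b < c ≤ n, E[m(a,b)·m(a,c)] = (m(1+β)/(2+β) + m(m−1)(1+β)²/(2+β)²) · (a²·b^{1+β}·c^{1+β})^{−1/(2+β)} · (1+θ) for some real θ with |θ| ≤ K/a. -/

import Mathlib

open Finset

/-- A parent sequence of length `N`: for each `t ∈ {2,…,N}` an index `f t ∈ {1,…,t-1}`. -/
def ParentSeq (N : ℕ) : Type :=
  ∀ t : Set.Icc 2 N, Set.Icc 1 ((t : ℕ) - 1)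

noncomputable instance (N : ℕ) : Fintype (ParentSeq N) := by
  unfold ParentSeq
  classical
  infer_instance

/-- The value of a parent sequence at `j` (junk value `0` outside `{2,…,N}`). -/
def pval {N : ℕ} (f : ParentSeq N) (j : ℕ) : ℕ :=
  if h : 2 ≤ j ∧ j ≤ N then (f ⟨j, Set.mem_Icc.mpr h⟩ : ℕ) else 0

/-- The degree `d_t(v_i)` of vertex `i` at time `t` in the tree determined by `f`. -/
def deg {N : ℕ} (f : ParentSeq N) (t i : ℕ) : ℕ :=
  ((Finset.Icc 2 t).filter (fun j => pval f j = i)).card + (if 2 ≤ i then 1 else 0)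

/-- The Móri probability of the parent sequence `f`. -/
noncomputable def moriP {N : ℕ} (β : ℝ) (f : ParentSeq N) : ℝ :=
  ∏ t ∈ Finset.Icc 2 N, ((deg f (t - 1) (pval f t) : ℝ) + β) / ((2 + β) * ((t : ℝ) - 1) - 2)

/-- Expectation of `X` under the Móri measure on parent sequences of length `N`. -/
noncomputable def moriE (N : ℕ) (β : ℝ) (X : ParentSeq N → ℝ) : ℝ :=
  ∑ f : ParentSeq N, moriP β f * X f

open Classical in
/-- Probability of an event under the Móri measure on parent sequences of length `N`. -/
noncomputable def moriPr (N : ℕ) (β : ℝ) (p : ParentSeq N → Prop) : ℝ :=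
  ∑ f : ParentSeq N, if p f then moriP β f else 0

/-- The index of the merged vertex containing tree vertex `t` when merging in blocks of `m`. -/
def blk (m t : ℕ) : ℕ := (t - 1) / m + 1

/-- The number `m(a,b)` of edges joining `u_a` and `u_b` in the Móri graph `G^n_{m,β}`. -/
def mult (n m : ℕ) (f : ParentSeq (n * m)) (a b : ℕ) : ℕ :=
  ((Finset.Icc 2 (n * m)).filter (fun t =>
    (blk m t = a ∧ blk m (pval f t) = b) ∨ (blk m t = b ∧ blk m (pval f t) = a))).card

/-- The degree `d(u_i)` of the merged vertex `u_i` in the Móri graph `G^n_{m,β}`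
(a loop contributes `2`). -/
def degU (n m : ℕ) (f : ParentSeq (n * m)) (i : ℕ) : ℕ :=
  ((Finset.Icc 2 (n * m)).filter (fun t => blk m t = i)).card +
  ((Finset.Icc 2 (n * m)).filter (fun t => blk m (pval f t) = i)).card


/-!
The total weight `Y` of a fixed set of vertices is a Pólya urn: the next vertex attaches to the set
with probability `Y / D_N`, where `D_N = (2+β)N - 2`, and then raises `Y` by one. Hence the rising
moments `E[Y]` and `E[Y(Y+1)]` evolve by deterministic factors `1 + k / D_N`, and the expectation of
the product of two attachment indicators is exactly `E[Y(Y+1)]`, taken at the completion of the set,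
times a product of such factors. Each factor equals `((N+1)/N)^{k/(2+β)}` up to `exp(O(1/N²))`, so
the logarithm of the product is known up to an error `O(1/a)` when all times are at least of order
`a`. At its completion, the block of `m` tree vertices merged into `u_a` has weight `m(1+β)` plus
the number of its internal edges (less one for the root), which is `O(1/a)` in expectation.
Summing over the `m²` pairs of tree vertices in `u_b` and `u_c` gives the result.
-/

namespace ParentSeq

variable {N : ℕ}

theorem ext_pval {f g : ParentSeq N} (h : ∀ j, pval f j = pval g j) : f = g := by
  funext t
  have ht : 2 ≤ t.1 ∧ t.1 ≤ N := t.2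
  exact Subtype.ext (by simpa [pval, ht] using h t)

theorem pval_mem_Icc (f : ParentSeq N) {j : ℕ} (h2 : 2 ≤ j) (hj : j ≤ N) :
    pval f j ∈ Set.Icc 1 (j - 1) := by
  rw [pval, dif_pos ⟨h2, hj⟩]
  exact (f ⟨j, h2, hj⟩).2

theorem one_le_pval (f : ParentSeq N) {j : ℕ} (h2 : 2 ≤ j) (hj : j ≤ N) : 1 ≤ pval f j :=
  (f.pval_mem_Icc h2 hj).1

theorem pval_le_sub_one (f : ParentSeq N) (j : ℕ) : pval f j ≤ j - 1 := by
  by_cases h : 2 ≤ j ∧ j ≤ N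
  · exact (f.pval_mem_Icc h.1 h.2).2
  · rw [pval, dif_neg h]
    exact Nat.zero_le _

/-- The tree `f` after attaching one more vertex, `v_{N+1}`, to `v_i`. -/
def snoc (f : ParentSeq N) (i : Set.Icc 1 N) : ParentSeq (N + 1) := fun t =>
  if h : (t : ℕ) ≤ N then f ⟨t, t.2.1, h⟩
  else ⟨i, i.2.1, by have := i.2.2; omega⟩

theorem pval_snoc (f : ParentSeq N) (i : Set.Icc 1 N) :
    pval (f.snoc i) = Function.update (pval f) (N + 1) i := by
  have hN : 1 ≤ N := i.2.1.trans i.2.2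
  funext j
  obtain rfl | hj := eq_or_ne j (N + 1)
  · simp [pval, snoc, hN]
  · rw [Function.update_of_ne hj]
    by_cases h : 2 ≤ j ∧ j ≤ N
    · simp [pval, snoc, h, h.2.trans N.le_succ]
    · have h' : ¬ (2 ≤ j ∧ j ≤ N + 1) := by omega
      simp [pval, h, h']

theorem pval_snoc_last (f : ParentSeq N) (i : Set.Icc 1 N) : pval (f.snoc i) (N + 1) = i := by
  rw [pval_snoc, Function.update_self]

theorem pval_snoc_of_ne (f : ParentSeq N) (i : Set.Icc 1 N) {j : ℕ} (hj : j ≠ N + 1) :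
    pval (f.snoc i) j = pval f j := by
  rw [pval_snoc, Function.update_of_ne hj]

/-- The tree `f` with its last vertex removed. -/
def dropLast (f : ParentSeq (N + 1)) : ParentSeq N := fun t => f ⟨t, t.2.1, t.2.2.trans N.le_succ⟩

theorem pval_dropLast (f : ParentSeq (N + 1)) {j : ℕ} (hj : j ≠ N + 1) :
    pval f.dropLast j = pval f j := by
  by_cases h : 2 ≤ j ∧ j ≤ N
  · simp [pval, dropLast, h, h.2.trans N.le_succ]
  · have h' : ¬ (2 ≤ j ∧ j ≤ N + 1) := by omega
    simp [pval, h, h']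

theorem dropLast_snoc (f : ParentSeq N) (i : Set.Icc 1 N) : (f.snoc i).dropLast = f := by
  refine ext_pval fun j => ?_
  obtain rfl | hj := eq_or_ne j (N + 1)
  · simp [pval]
  · rw [pval_dropLast _ hj, pval_snoc_of_ne f i hj]

/-- The one-step decomposition of a tree into its past and the parent of its last vertex. -/
def snocEquiv (hN : 1 ≤ N) : ParentSeq N × Set.Icc 1 N ≃ ParentSeq (N + 1) where
  toFun p := p.1.snoc p.2
  invFun f := (f.dropLast, ⟨pval f (N + 1), f.pval_mem_Icc (Nat.succ_le_succ hN) le_rfl⟩)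
  left_inv p := Prod.ext (p.1.dropLast_snoc p.2) (Subtype.ext (p.1.pval_snoc_last p.2))
  right_inv f := ext_pval fun j => by
    obtain rfl | hj := eq_or_ne j (N + 1)
    · rw [pval_snoc_last]
    · rw [pval_snoc_of_ne _ _ hj, pval_dropLast f hj]

/-- The indicator of the event that the parent of `v_j` lies in `A`. -/
noncomputable def hit (f : ParentSeq N) (A : Finset ℕ) (j : ℕ) : ℝ := if pval f j ∈ A then 1 else 0

theorem hit_nonneg (f : ParentSeq N) (A : Finset ℕ) (j : ℕ) : 0 ≤ f.hit A j := by
  unfold hit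
  split_ifs <;> norm_num

theorem hit_le_one (f : ParentSeq N) (A : Finset ℕ) (j : ℕ) : f.hit A j ≤ 1 := by
  unfold hit
  split_ifs <;> norm_num

theorem hit_snoc_last (f : ParentSeq N) (i : Set.Icc 1 N) (A : Finset ℕ) :
    (f.snoc i).hit A (N + 1) = if (i : ℕ) ∈ A then 1 else 0 := by
  rw [hit, pval_snoc_last]

theorem hit_snoc_of_le (f : ParentSeq N) (i : Set.Icc 1 N) (A : Finset ℕ) {j : ℕ} (hj : j ≤ N) :
    (f.snoc i).hit A j = f.hit A j := by
  rw [hit, pval_snoc_of_ne f i (by omega), hit]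

theorem deg_snoc (f : ParentSeq N) (i : Set.Icc 1 N) {t k : ℕ} (ht : t ≤ N) :
    deg (f.snoc i) t k = deg f t k := by
  unfold deg
  congr 2
  refine filter_congr fun j hj => ?_
  rw [pval_snoc_of_ne f i (by have := (mem_Icc.mp hj).2; omega)]

/-- The total attachment weight `∑ (d_t(v_i) + β)` of the vertices in `A` at time `t`, to which the
probability that `v_{t+1}` attaches to `A` is proportional. -/
noncomputable def weight (f : ParentSeq N) (β : ℝ) (A : Finset ℕ) (t : ℕ) : ℝ :=
  ∑ i ∈ A, ((deg f t i : ℝ) + β)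

theorem weight_eq_sum_hit (f : ParentSeq N) (β : ℝ) (A : Finset ℕ) (t : ℕ) :
    f.weight β A t = ∑ j ∈ Icc 2 t, f.hit A j + #{i ∈ A | 2 ≤ i} + β * #A := by
  have in_degrees : ∑ i ∈ A, (#{j ∈ Icc 2 t | pval f j = i} : ℝ) = ∑ j ∈ Icc 2 t, f.hit A j := by
    simp only [natCast_card_filter]
    rw [sum_comm]
    exact sum_congr rfl fun j _ => sum_ite_eq A (pval f j) fun _ => 1
  simp only [weight, deg, Nat.cast_add, sum_add_distrib, in_degrees, sum_const, nsmul_eq_mul,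
    Nat.cast_ite, Nat.cast_one, Nat.cast_zero, sum_boole, mul_comm β]

theorem weight_snoc (f : ParentSeq N) (i : Set.Icc 1 N) (β : ℝ) (A : Finset ℕ) :
    (f.snoc i).weight β A (N + 1) = f.weight β A N + if (i : ℕ) ∈ A then 1 else 0 := by
  have hN : 1 ≤ N := i.2.1.trans i.2.2
  have past : ∑ j ∈ Icc 2 N, (f.snoc i).hit A j = ∑ j ∈ Icc 2 N, f.hit A j :=
    sum_congr rfl fun j hj => f.hit_snoc_of_le i A (mem_Icc.mp hj).2
  rw [weight_eq_sum_hit, weight_eq_sum_hit, sum_Icc_succ_top (by omega), past, hit_snoc_last]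
  ring

theorem deg_mono (f : ParentSeq N) (i : ℕ) : Monotone fun t => deg f t i := fun _ _ hst =>
  Nat.add_le_add_right (card_le_card (filter_subset_filter _ (Icc_subset_Icc_right hst))) _

theorem weight_mono {β : ℝ} (hβ : 0 ≤ β) (f : ParentSeq N) {A B : Finset ℕ} (hAB : A ⊆ B)
    {s t : ℕ} (hst : s ≤ t) : f.weight β A s ≤ f.weight β B t := by
  refine (sum_le_sum_of_subset_of_nonneg hAB fun _ _ _ => by positivity).trans ?_
  exact sum_le_sum fun i _ => by gcongr; exact f.deg_mono i hst

theorem mul_card_le_weight (f : ParentSeq N) (β : ℝ) (A : Finset ℕ) (t : ℕ) :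
    β * #A ≤ f.weight β A t := by
  rw [mul_comm, ← nsmul_eq_mul]
  exact card_nsmul_le_sum A _ β fun i _ => le_add_of_nonneg_left (Nat.cast_nonneg _)

end ParentSeq

namespace Mori

/-- The attachment weight of the whole tree on `N` vertices: the normalising constant of the
attachment probabilities of `v_{N+1}`. -/
noncomputable def totalWeight (β : ℝ) (N : ℕ) : ℝ := (2 + β) * N - 2

theorem weight_Icc_one {N : ℕ} (hN : 1 ≤ N) (f : ParentSeq N) (β : ℝ) :
    f.weight β (Icc 1 N) N = totalWeight β N := by
  have hits : ∀ j ∈ Icc 2 N, f.hit (Icc 1 N) j = 1 := fun j hj => by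
    obtain ⟨h2, hjN⟩ := mem_Icc.mp hj
    have := f.pval_le_sub_one j
    exact if_pos (mem_Icc.mpr ⟨f.one_le_pval h2 hjN, by omega⟩)
  have nonroot : {i ∈ Icc 1 N | 2 ≤ i} = Icc 2 N := by ext i; simp; omega
  rw [f.weight_eq_sum_hit, sum_congr rfl hits, nonroot]
  simp only [sum_const, Nat.card_Icc, nsmul_eq_mul, mul_one, Nat.add_sub_cancel, totalWeight,
    show N + 1 - 2 = N - 1 by omega, Nat.cast_sub hN]
  push_cast
  ring

theorem mul_le_totalWeight (β : ℝ) {N : ℕ} (hN : 1 ≤ N) : β * N ≤ totalWeight β N := by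
  have : (1 : ℝ) ≤ N := by exact_mod_cast hN
  unfold totalWeight
  linarith

theorem totalWeight_pos {β : ℝ} (hβ : 0 < β) {N : ℕ} (hN : 1 ≤ N) : 0 < totalWeight β N :=
  lt_of_lt_of_le (by positivity) (mul_le_totalWeight β hN)

theorem moriP_snoc {N : ℕ} (β : ℝ) (f : ParentSeq N) (i : Set.Icc 1 N) :
    moriP β (f.snoc i) = moriP β f * ((deg f N i + β) / totalWeight β N) := by
  have hN : 1 ≤ N := i.2.1.trans i.2.2
  unfold moriP
  rw [prod_Icc_succ_top (by omega)]
  congr 1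
  · refine prod_congr rfl fun t ht => ?_
    have := (mem_Icc.mp ht).2
    rw [f.pval_snoc_of_ne i (by omega), f.deg_snoc i (by omega)]
  · rw [f.pval_snoc_last, Nat.add_sub_cancel, f.deg_snoc i le_rfl, totalWeight]
    push_cast
    ring_nf

theorem moriP_nonneg {β : ℝ} (hβ : 0 ≤ β) {N : ℕ} (f : ParentSeq N) : 0 ≤ moriP β f := by
  refine prod_nonneg fun t ht => div_nonneg (by positivity) ?_
  have h2 : (2 : ℝ) ≤ t := by exact_mod_cast (mem_Icc.mp ht).1
  nlinarith

section Linearity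

variable {N : ℕ} {β : ℝ}

theorem moriE_const_mul (c : ℝ) (X : ParentSeq N → ℝ) :
    moriE N β (fun f => c * X f) = c * moriE N β X := by
  simp only [moriE, mul_sum, mul_left_comm]

theorem moriE_add (X Y : ParentSeq N → ℝ) :
    moriE N β (fun f => X f + Y f) = moriE N β X + moriE N β Y := by
  simp only [moriE, mul_add, sum_add_distrib]

theorem moriE_sum {ι : Type*} (s : Finset ι) (X : ι → ParentSeq N → ℝ) :
    moriE N β (fun f => ∑ i ∈ s, X i f) = ∑ i ∈ s, moriE N β (X i) := by
  simp only [moriE, mul_sum]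
  exact sum_comm

theorem moriE_mono (hβ : 0 ≤ β) {X Y : ParentSeq N → ℝ} (h : ∀ f, X f ≤ Y f) :
    moriE N β X ≤ moriE N β Y :=
  sum_le_sum fun f _ => mul_le_mul_of_nonneg_left (h f) (moriP_nonneg hβ f)

end Linearity

theorem moriE_succ {N : ℕ} (hN : 1 ≤ N) (β : ℝ) (X : ParentSeq (N + 1) → ℝ) :
    moriE (N + 1) β X = moriE N β fun f =>
      ∑ i : Set.Icc 1 N, (deg f N i + β) / totalWeight β N * X (f.snoc i) := by
  unfold moriE
  rw [← (ParentSeq.snocEquiv hN).sum_comp, Fintype.sum_prod_type]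
  refine sum_congr rfl fun f _ => ?_
  rw [mul_sum]
  refine sum_congr rfl fun i _ => ?_
  rw [← mul_assoc, ← moriP_snoc]
  rfl

/-- Conditioning on the first `N` vertices, for an observable that only distinguishes whether or not
`v_{N+1}` attaches to `A`. -/
theorem moriE_succ_of_ite {β : ℝ} (hβ : 0 < β) {N : ℕ} (hN : 1 ≤ N) {A : Finset ℕ}
    (hA : A ⊆ Icc 1 N) {X : ParentSeq (N + 1) → ℝ} {P Q : ParentSeq N → ℝ}
    (hX : ∀ f (i : Set.Icc 1 N), X (f.snoc i) = if (i : ℕ) ∈ A then P f else Q f) :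
    moriE (N + 1) β X = moriE N β fun f =>
      f.weight β A N / totalWeight β N * P f + (1 - f.weight β A N / totalWeight β N) * Q f := by
  rw [moriE_succ hN]
  congr 1
  funext f
  set D := totalWeight β N
  have hD : D ≠ 0 := (totalWeight_pos hβ hN).ne'
  calc ∑ i : Set.Icc 1 N, (deg f N i + β) / D * X (f.snoc i)
      = ∑ i ∈ Icc 1 N, (deg f N i + β) / D * if i ∈ A then P f else Q f := by
        simp only [hX]
        exact (sum_subtype (Icc 1 N) (fun _ => mem_Icc) fun i =>
          (deg f N i + β) / D * if i ∈ A then P f else Q f).symm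
    _ = ∑ i ∈ Icc 1 N, (if i ∈ A then (deg f N i + β) * ((P f - Q f) / D) else 0)
          + ∑ i ∈ Icc 1 N, (deg f N i + β) * (Q f / D) := by
        rw [← sum_add_distrib]
        refine sum_congr rfl fun i _ => ?_
        split_ifs <;> ring
    _ = f.weight β A N * ((P f - Q f) / D) + f.weight β (Icc 1 N) N * (Q f / D) := by
        rw [← sum_filter, filter_mem_eq_inter, inter_eq_right.mpr hA, ← sum_mul, ← sum_mul,
          ParentSeq.weight, ParentSeq.weight]
    _ = f.weight β A N / D * P f + (1 - f.weight β A N / D) * Q f := by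
        rw [weight_Icc_one hN]
        field_simp
        ring

theorem moriE_succ_of_snoc {β : ℝ} (hβ : 0 < β) {N : ℕ} (hN : 1 ≤ N) {X : ParentSeq (N + 1) → ℝ}
    {Y : ParentSeq N → ℝ} (hX : ∀ f i, X (f.snoc i) = Y f) : moriE (N + 1) β X = moriE N β Y := by
  rw [moriE_succ_of_ite hβ hN (empty_subset _) (P := Y) (Q := Y) (by simpa using hX)]
  congr 1
  funext f
  ring

theorem moriE_eq_of_le {β : ℝ} (hβ : 0 < β) {N M : ℕ} (hN : 1 ≤ N) (hNM : N ≤ M)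
    {X : ∀ L, ParentSeq L → ℝ}
    (hX : ∀ L, N ≤ L → ∀ (f : ParentSeq L) i, X (L + 1) (f.snoc i) = X L f) :
    moriE M β (X M) = moriE N β (X N) := by
  induction M, hNM using Nat.le_induction with
  | base => rfl
  | succ M hNM ih => rw [moriE_succ_of_snoc hβ (hN.trans hNM) (hX M hNM), ih]

theorem moriE_const {β : ℝ} (hβ : 0 < β) {N : ℕ} (hN : 1 ≤ N) (c : ℝ) :
    moriE N β (fun _ => c) = c := by
  have no_edges (t : Set.Icc 2 1) : False := absurd (t.2.1.trans t.2.2) (by norm_num)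
  let root : ParentSeq 1 := fun t => (no_edges t).elim
  rw [moriE_eq_of_le hβ le_rfl hN (X := fun _ _ => c) (fun _ _ _ _ => rfl), moriE,
    Fintype.sum_eq_single root fun f hf => absurd (funext fun t => (no_edges t).elim) hf]
  simp [moriP]

theorem abs_moriE_sub_le {β : ℝ} (hβ : 0 < β) {N : ℕ} (hN : 1 ≤ N) {X Y : ParentSeq N → ℝ} {c : ℝ}
    (h : ∀ f, |X f - c| ≤ Y f) : |moriE N β X - c| ≤ moriE N β Y := by
  have lower : moriE N β (fun _ => c) ≤ moriE N β (fun f => X f + Y f) :=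
    moriE_mono hβ.le fun f => by linarith [(abs_le.mp (h f)).1]
  have upper : moriE N β X ≤ moriE N β (fun f => Y f + c) :=
    moriE_mono hβ.le fun f => by linarith [(abs_le.mp (h f)).2]
  rw [moriE_const hβ hN, moriE_add] at lower
  rw [moriE_add, moriE_const hβ hN] at upper
  exact abs_le.mpr ⟨by linarith, by linarith⟩

/-- The second rising moment `E[Y(Y+1)]` of the attachment weight `Y` of `A` at time `t`. -/
noncomputable def risingMoment (β : ℝ) (A : Finset ℕ) (t : ℕ) : ℝ :=
  moriE t β fun f => f.weight β A t * (f.weight β A t + 1)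

/-- The factor by which the `k`-th rising moment `E[Y(Y+1)⋯(Y+k-1)]` of an attachment weight `Y`
grows between times `s` and `t`. -/
noncomputable def growth (β k : ℝ) (s t : ℕ) : ℝ := ∏ x ∈ Ico s t, (1 + k / totalWeight β x)

theorem growth_succ (β k : ℝ) {s t : ℕ} (hst : s ≤ t) :
    growth β k s (t + 1) = growth β k s t * (1 + k / totalWeight β t) :=
  prod_Ico_succ_top hst _

theorem growth_pos {β k : ℝ} (hβ : 0 < β) (hk : 0 ≤ k) {s : ℕ} (hs : 1 ≤ s) (t : ℕ) :
    0 < growth β k s t := by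
  refine prod_pos fun x hx => ?_
  have := totalWeight_pos hβ (hs.trans (mem_Ico.mp hx).1)
  positivity

/-- Given the tree at time `s`, the probability that both `v_{N+1}` and `v_{M+1}` attach to a set of
its vertices of attachment weight `Y` is `Y(Y+1)` times this factor. -/
noncomputable def pairFactor (β : ℝ) (s N M : ℕ) : ℝ :=
  growth β 2 s N * growth β 1 (N + 1) M / (totalWeight β N * totalWeight β M)

section Moments

variable {β : ℝ} {A : Finset ℕ}

theorem risingMoment_eq_mul_growth (hβ : 0 < β) {s t : ℕ} (hs : 1 ≤ s) (hA : A ⊆ Icc 1 s)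
    (hst : s ≤ t) :
    risingMoment β A t = risingMoment β A s * growth β 2 s t := by
  induction t, hst using Nat.le_induction with
  | base => simp [growth]
  | succ t hst ih =>
    rw [growth_succ β 2 hst, ← mul_assoc, ← ih, risingMoment,
      moriE_succ_of_ite hβ (hs.trans hst) (hA.trans (Icc_subset_Icc_right hst))
        (P := fun f => (f.weight β A t + 1) * (f.weight β A t + 2))
        (Q := fun f => f.weight β A t * (f.weight β A t + 1))
        fun f i => by rw [f.weight_snoc]; split_ifs <;> ring,
      risingMoment, mul_comm, ← moriE_const_mul]
    congr 1
    funext f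
    ring

/-- The size-biased step: attaching to `A` has probability proportional to the weight `Y` of `A`,
and raises that weight to `Y + 1`. -/
theorem moriE_hit_last_mul_weight (hβ : 0 < β) {N : ℕ} (hN : 1 ≤ N) (hA : A ⊆ Icc 1 N) :
    moriE (N + 1) β (fun f => f.hit A (N + 1) * f.weight β A (N + 1)) =
      risingMoment β A N / totalWeight β N := by
  rw [moriE_succ_of_ite hβ hN hA (P := fun f => f.weight β A N + 1) (Q := fun _ => 0)
      fun f i => by rw [f.weight_snoc, f.hit_snoc_last]; split_ifs <;> ring,
    risingMoment, div_eq_inv_mul, ← moriE_const_mul]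
  congr 1
  funext f
  ring

theorem moriE_hit_mul_weight (hβ : 0 < β) {N t : ℕ} (hN : 1 ≤ N) (hA : A ⊆ Icc 1 N)
    (ht : N + 1 ≤ t) :
    moriE t β (fun f => f.hit A (N + 1) * f.weight β A t) =
      risingMoment β A N / totalWeight β N * growth β 1 (N + 1) t := by
  induction t, ht using Nat.le_induction with
  | base => simp [growth, moriE_hit_last_mul_weight hβ hN hA]
  | succ t ht ih =>
    rw [growth_succ β 1 ht, ← mul_assoc, ← ih,
      moriE_succ_of_ite hβ (by omega) (hA.trans (Icc_subset_Icc_right (by omega)))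
        (P := fun f => f.hit A (N + 1) * (f.weight β A t + 1))
        (Q := fun f => f.hit A (N + 1) * f.weight β A t)
        fun f i => by rw [f.weight_snoc, f.hit_snoc_of_le i A ht]; split_ifs <;> ring,
      mul_comm, ← moriE_const_mul]
    congr 1
    funext f
    ring

theorem moriE_hit_last (hβ : 0 < β) (A : Finset ℕ) {N : ℕ} (hN : 1 ≤ N) :
    moriE (N + 1) β (fun f => f.hit A (N + 1)) =
      moriE N β fun f => f.weight β (A ∩ Icc 1 N) N / totalWeight β N := by
  rw [moriE_succ_of_ite hβ hN (A := A ∩ Icc 1 N) inter_subset_right (P := fun _ => 1)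
    (Q := fun _ => 0) fun f i => ?_]
  · simp only [mul_one, mul_zero, add_zero]
  · have : (i : ℕ) ∈ Icc 1 N := mem_Icc.mpr i.2
    simp only [f.hit_snoc_last, mem_inter, this, and_true]

theorem moriE_hit_mul_hit_last (hβ : 0 < β) {N M : ℕ} (hN : 1 ≤ N) (hA : A ⊆ Icc 1 N)
    (hNM : N < M) :
    moriE (M + 1) β (fun f => f.hit A (N + 1) * f.hit A (M + 1)) =
      risingMoment β A N / totalWeight β N * growth β 1 (N + 1) M / totalWeight β M := by
  rw [moriE_succ_of_ite hβ (by omega) (hA.trans (Icc_subset_Icc_right hNM.le))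
      (P := fun f => f.hit A (N + 1)) (Q := fun _ => 0)
      fun f i => by rw [f.hit_snoc_last, f.hit_snoc_of_le i A hNM]; split_ifs <;> ring,
    ← moriE_hit_mul_weight hβ hN hA hNM, div_eq_inv_mul, ← moriE_const_mul]
  congr 1
  funext f
  ring

theorem pairFactor_pos (hβ : 0 < β) {s N M : ℕ} (hs : 1 ≤ s) (hsN : s ≤ N) (hNM : N < M) :
    0 < pairFactor β s N M :=
  div_pos (mul_pos (growth_pos hβ (by norm_num) hs N) (growth_pos hβ (by norm_num) (by omega) M))
    (mul_pos (totalWeight_pos hβ (by omega)) (totalWeight_pos hβ (by omega)))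

theorem moriE_hit_mul_hit (hβ : 0 < β) {s N M n : ℕ} (hs : 1 ≤ s) (hA : A ⊆ Icc 1 s)
    (hsN : s ≤ N) (hNM : N < M) (hMn : M < n) :
    moriE n β (fun f => f.hit A (N + 1) * f.hit A (M + 1)) =
      risingMoment β A s * pairFactor β s N M := by
  rw [moriE_eq_of_le hβ (by omega) hMn (X := fun _ f => f.hit A (N + 1) * f.hit A (M + 1))
      fun L hL f i => by rw [f.hit_snoc_of_le i A (by omega), f.hit_snoc_of_le i A (by omega)],
    moriE_hit_mul_hit_last hβ (hs.trans hsN) (hA.trans (Icc_subset_Icc_right hsN)) hNM,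
    risingMoment_eq_mul_growth hβ hs hA hsN, pairFactor]
  ring

end Moments

section Logarithms

theorem abs_log_sub_log_le {c x y : ℝ} (hc : 0 < c) (hx : c ≤ x) (hy : c ≤ y) :
    |Real.log x - Real.log y| ≤ |x - y| / c := by
  have one_sided {u v : ℝ} (hu : c ≤ u) (hv : c ≤ v) :
      Real.log u - Real.log v ≤ |u - v| / c := by
    have hu0 : 0 < u := hc.trans_le hu
    have hv0 : 0 < v := hc.trans_le hv
    calc Real.log u - Real.log v = Real.log (u / v) := (Real.log_div hu0.ne' hv0.ne').symm
      _ ≤ u / v - 1 := Real.log_le_sub_one_of_pos (div_pos hu0 hv0)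
      _ = (u - v) / v := (div_sub_one hv0.ne').trans rfl
      _ ≤ |u - v| / c := div_le_div₀ (abs_nonneg _) (le_abs_self _) hc hv
  rw [abs_sub_le_iff]
  exact ⟨one_sided hx hy, abs_sub_comm x y ▸ one_sided hy hx⟩

theorem abs_log_one_add_sub_le {u : ℝ} (hu : 0 ≤ u) : |Real.log (1 + u) - u| ≤ u ^ 2 := by
  have upper := Real.log_le_sub_one_of_pos (by linarith : 0 < 1 + u)
  have lower := Real.one_sub_inv_le_log_of_pos (by linarith : 0 < 1 + u)
  have expand : 1 - (1 + u)⁻¹ = u - u ^ 2 / (1 + u) := by field_simp; ring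
  have : u ^ 2 / (1 + u) ≤ u ^ 2 := div_le_self (sq_nonneg u) (by linarith)
  exact abs_le.mpr ⟨by linarith, by linarith [sq_nonneg u]⟩

theorem abs_log_add_one_sub_log_sub_inv_le {x : ℝ} (hx : 0 < x) :
    |Real.log (x + 1) - Real.log x - 1 / x| ≤ 1 / x ^ 2 := by
  have h := abs_log_one_add_sub_le (u := 1 / x) (by positivity)
  rwa [show 1 + 1 / x = (x + 1) / x by field_simp, Real.log_div (by positivity) hx.ne', div_pow,
    one_pow] at h

theorem one_div_sq_le {x : ℝ} (hx : 1 ≤ x) : 1 / x ^ 2 ≤ 2 * (1 / x - 1 / (x + 1)) := by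
  have : 2 * (1 / x - 1 / (x + 1)) - 1 / x ^ 2 = (x - 1) / (x ^ 2 * (x + 1)) := by
    field_simp
    ring
  have : 0 ≤ (x - 1) / (x ^ 2 * (x + 1)) := div_nonneg (by linarith) (by positivity)
  linarith

theorem abs_sub_le_of_abs_log_sub_log_le {x y ε : ℝ} (hx : 0 < x) (hy : 0 < y)
    (h : |Real.log x - Real.log y| ≤ ε) : |x - y| ≤ ε * Real.exp ε * y := by
  obtain ⟨lower, upper⟩ := abs_le.mp h
  have hε : 0 ≤ ε := (abs_nonneg _).trans h
  have hexp : 1 ≤ Real.exp ε := Real.one_le_exp hε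
  have hx_le : x ≤ y * Real.exp ε := by
    rw [← Real.log_le_log_iff hx (by positivity), Real.log_mul hy.ne' (Real.exp_ne_zero _),
      Real.log_exp]
    linarith
  have hx_ge : y * Real.exp (-ε) ≤ x := by
    rw [← Real.log_le_log_iff (by positivity) hx, Real.log_mul hy.ne' (Real.exp_ne_zero _),
      Real.log_exp]
    linarith
  have exp_neg_ge : 1 - ε ≤ Real.exp (-ε) := Real.one_sub_le_exp_neg ε
  have exp_sub_one_le : Real.exp ε - 1 ≤ ε * Real.exp ε := by
    have := mul_le_mul_of_nonneg_right exp_neg_ge (Real.exp_pos ε).le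
    rw [← Real.exp_add, neg_add_cancel, Real.exp_zero] at this
    linarith
  have : ε ≤ ε * Real.exp ε := le_mul_of_one_le_right hε hexp
  exact abs_le.mpr ⟨by nlinarith, by nlinarith⟩

end Logarithms

section Asymptotics

variable {β : ℝ}

theorem abs_div_totalWeight_sub_le (hβ : 0 < β) {k : ℝ} (hk : 0 ≤ k) {x : ℕ} (hx : 1 ≤ x) :
    |k / totalWeight β x - k / (2 + β) * (1 / x)| ≤ 2 * k / (β * (2 + β)) * (1 / (x : ℝ) ^ 2) := by
  have : (0 : ℝ) < x := by exact_mod_cast hx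
  have := totalWeight_pos hβ hx
  have diff : k / totalWeight β x - k / (2 + β) * (1 / x) =
      2 * k / (totalWeight β x * ((2 + β) * x)) := by
    field_simp
    unfold totalWeight
    ring
  calc |k / totalWeight β x - k / (2 + β) * (1 / x)|
      = 2 * k / (totalWeight β x * ((2 + β) * x)) := by rw [diff, abs_of_nonneg (by positivity)]
    _ ≤ 2 * k / (β * x * ((2 + β) * x)) := by gcongr; exact mul_le_totalWeight β hx
    _ = 2 * k / (β * (2 + β)) * (1 / (x : ℝ) ^ 2) := by field_simp

theorem exists_abs_log_growth_factor_sub_le (hβ : 0 < β) {k : ℝ} (hk : 0 < k) :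
    ∃ C > 0, ∀ x : ℕ, 1 ≤ x →
      |Real.log (1 + k / totalWeight β x) - k / (2 + β) * (Real.log (x + 1) - Real.log x)| ≤
        C * (1 / x - 1 / (x + 1)) := by
  let C := (k / β) ^ 2 + 2 * k / (β * (2 + β)) + k / (2 + β)
  refine ⟨C * 2, by positivity, fun x hx => ?_⟩
  have hx1 : (1 : ℝ) ≤ x := by exact_mod_cast hx
  have hx0 : (0 : ℝ) < x := by linarith
  have hD := totalWeight_pos hβ hx
  have log_growth : |Real.log (1 + k / totalWeight β x) - k / totalWeight β x| ≤
      (k / β) ^ 2 * (1 / (x : ℝ) ^ 2) := by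
    calc _ ≤ (k / totalWeight β x) ^ 2 := abs_log_one_add_sub_le (by positivity)
      _ ≤ (k / (β * x)) ^ 2 := by gcongr; exact mul_le_totalWeight β hx
      _ = _ := by field_simp
  have linear := abs_div_totalWeight_sub_le hβ hk.le hx
  have log_step : |k / (2 + β) * (Real.log (x + 1) - Real.log x - 1 / x)| ≤
      k / (2 + β) * (1 / (x : ℝ) ^ 2) := by
    rw [abs_mul, abs_of_pos (by positivity)]
    exact mul_le_mul_of_nonneg_left (abs_log_add_one_sub_log_sub_inv_le hx0) (by positivity)
  calc _ ≤ C * (1 / (x : ℝ) ^ 2) := by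
        rw [abs_le] at *
        constructor <;> linarith
    _ ≤ C * (2 * (1 / x - 1 / (x + 1))) :=
        mul_le_mul_of_nonneg_left (one_div_sq_le hx1) (by positivity)
    _ = _ := by ring

theorem exists_abs_log_growth_sub_le (hβ : 0 < β) {k : ℝ} (hk : 0 < k) :
    ∃ C > 0, ∀ s t : ℕ, 1 ≤ s → s ≤ t →
      |Real.log (growth β k s t) - k / (2 + β) * (Real.log t - Real.log s)| ≤ C / s := by
  obtain ⟨C, hC, factor_le⟩ := exists_abs_log_growth_factor_sub_le hβ hk
  refine ⟨C, hC, fun s t hs hst => ?_⟩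
  suffices telescope : |Real.log (growth β k s t) - k / (2 + β) * (Real.log t - Real.log s)| ≤
      C * (1 / s - 1 / t) by
    refine telescope.trans ?_
    rw [div_eq_mul_one_div C]
    exact mul_le_mul_of_nonneg_left (sub_le_self _ (by positivity)) hC.le
  induction t, hst using Nat.le_induction with
  | base => simp [growth]
  | succ t hst ih =>
    have hD := totalWeight_pos hβ (hs.trans hst)
    rw [growth_succ β k hst, Real.log_mul (growth_pos hβ hk.le hs t).ne' (by positivity)]
    have := factor_le t (hs.trans hst)
    push_cast
    rw [abs_le] at *
    constructor <;> linarith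

theorem abs_log_totalWeight_sub_le (hβ : 0 < β) {N : ℕ} (hN : 1 ≤ N) :
    |Real.log (totalWeight β N) - (Real.log (2 + β) + Real.log N)| ≤ 2 / β / N := by
  have hN0 : (0 : ℝ) < N := by exact_mod_cast hN
  rw [← Real.log_mul (by positivity) hN0.ne']
  refine (abs_log_sub_log_le (by positivity) (mul_le_totalWeight β hN) (by nlinarith)).trans ?_
  rw [totalWeight, sub_sub_cancel_left, abs_neg, abs_of_pos (two_pos : (0 : ℝ) < 2), div_div]

/-- The leading order `(x² y^{1+β} z^{1+β})^{-1/(2+β)}` of the pair probabilities. -/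
noncomputable def pairScale (β x y z : ℝ) : ℝ :=
  (x ^ 2 * y ^ (1 + β) * z ^ (1 + β)) ^ (-(1 / (2 + β)))

theorem pairScale_pos {x y z : ℝ} (hx : 0 < x) (hy : 0 < y) (hz : 0 < z) :
    0 < pairScale β x y z := by
  unfold pairScale
  positivity

theorem log_pairScale (hβ : 0 < β) {x y z : ℝ} (hx : 0 < x) (hy : 0 < y) (hz : 0 < z) :
    Real.log (pairScale β x y z) = -(2 / (2 + β)) * Real.log x +
      (1 / (2 + β) - 1) * Real.log y + (1 / (2 + β) - 1) * Real.log z := by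
  unfold pairScale
  rw [Real.log_rpow (by positivity), Real.log_mul (by positivity) (by positivity),
    Real.log_mul (by positivity) (by positivity), Real.log_rpow hy, Real.log_rpow hz, Real.log_pow]
  field_simp
  push_cast
  ring

theorem exists_abs_log_pairFactor_sub_le (hβ : 0 < β) :
    ∃ C > 0, ∀ s N M : ℕ, 1 ≤ s → s ≤ N → N < M →
      |Real.log (pairFactor β s N M) - (Real.log (pairScale β s N M) - 2 * Real.log (2 + β))| ≤
        C / s := by
  obtain ⟨C₁, hC₁, growth_one⟩ := exists_abs_log_growth_sub_le hβ one_pos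
  obtain ⟨C₂, hC₂, growth_two⟩ := exists_abs_log_growth_sub_le hβ two_pos
  refine ⟨C₂ + C₁ + 1 + 2 / β + 2 / β, by positivity, fun s N M hs hsN hNM => ?_⟩
  have hs0 : (0 : ℝ) < s := by exact_mod_cast hs
  have hN : (s : ℝ) ≤ N := by exact_mod_cast hsN
  have hM : (s : ℝ) ≤ M := by exact_mod_cast hsN.trans hNM.le
  have div_le {C x : ℝ} (hC : 0 ≤ C) (hx : (s : ℝ) ≤ x) : C / x ≤ C / s :=
    div_le_div_of_nonneg_left hC hs0 hx
  have early := growth_two s N hs hsN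
  have late := (growth_one (N + 1) M (by omega) hNM).trans
    (div_le hC₁.le (by push_cast; linarith))
  have log_succ : |1 / (2 + β) * (Real.log (N + 1) - Real.log N)| ≤ 1 / s := by
    rw [abs_mul, abs_of_pos (by positivity)]
    refine (mul_le_of_le_one_left (abs_nonneg _)
      ((div_le_one (by positivity)).mpr (by linarith))).trans ?_
    simpa using abs_log_sub_log_le hs0 (hN.trans (lt_add_one _).le) hN
  have normalizer_N := (abs_log_totalWeight_sub_le hβ (hs.trans hsN)).trans
    (div_le (by positivity) hN)
  have normalizer_M := (abs_log_totalWeight_sub_le hβ (by omega : 1 ≤ M)).trans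
    (div_le (by positivity) hM)
  have growth_early := growth_pos hβ zero_le_two hs N
  have growth_late := growth_pos hβ zero_le_one (by omega : 1 ≤ N + 1) M
  have total_N := totalWeight_pos hβ (hs.trans hsN)
  have total_M := totalWeight_pos hβ (by omega : 1 ≤ M)
  rw [pairFactor, log_pairScale hβ hs0 (by linarith) (by linarith),
    Real.log_div (by positivity) (by positivity), Real.log_mul (by positivity) (by positivity),
    Real.log_mul (by positivity) (by positivity)]
  push_cast at late
  have two_div : 2 / (2 + β) = 2 * (1 / (2 + β)) := by ring
  simp only [add_div]
  rw [two_div] at early ⊢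
  rw [abs_le] at *
  constructor <;> linarith

end Asymptotics


section Blocks

variable {β : ℝ} {m a : ℕ}

/-- The set of tree vertices that are merged into `u_a`, for `a ≥ 1`. -/
def block (m a : ℕ) : Finset ℕ := Ioc ((a - 1) * m) (a * m)

theorem mem_block_iff_blk_eq (hm : 1 ≤ m) (ha : 1 ≤ a) {t : ℕ} (ht : 1 ≤ t) :
    t ∈ block m a ↔ blk m t = a := by
  obtain ⟨a, rfl⟩ := Nat.exists_eq_add_of_le' ha
  rw [block, mem_Ioc, blk, Nat.add_right_cancel_iff, Nat.div_eq_iff hm, Nat.add_sub_cancel,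
    add_one_mul]
  omega

theorem card_block (ha : 1 ≤ a) : #(block m a) = m := by
  rw [block, Nat.card_Ioc, ← Nat.sub_mul, Nat.sub_sub_self ha, one_mul]

theorem block_subset_Icc : block m a ⊆ Icc 1 (a * m) :=
  fun _ hi => mem_Icc.mpr ⟨(Nat.zero_le _).trans_lt (mem_Ioc.mp hi).1, (mem_Ioc.mp hi).2⟩

theorem mul_le_of_succ_mem_block {b N : ℕ} (hab : a < b) (hN : N + 1 ∈ block m b) : a * m ≤ N :=
  (Nat.mul_le_mul_right m (Nat.le_sub_one_of_lt hab)).trans (Nat.le_of_lt_succ (mem_Ioc.mp hN).1)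

theorem mult_eq_sum_hit (hm : 1 ≤ m) {n b : ℕ} (f : ParentSeq (n * m)) (ha : 1 ≤ a) (hab : a < b)
    (hbn : b ≤ n) : (mult n m f a b : ℝ) = ∑ j ∈ block m b, f.hit (block m a) j := by
  have edges : {t ∈ Icc 2 (n * m) | (blk m t = a ∧ blk m (pval f t) = b) ∨
      (blk m t = b ∧ blk m (pval f t) = a)} = {t ∈ block m b | pval f t ∈ block m a} := by
    ext t
    rw [mem_filter, mem_filter, mem_Icc]
    constructor
    · rintro ⟨⟨h2, ht⟩, h⟩
      have parent_pos := f.one_le_pval h2 ht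
      have parent_le : blk m (pval f t) ≤ blk m t := Nat.add_le_add_right
        (Nat.div_le_div_right (by have := f.pval_le_sub_one t; omega)) 1
      rw [mem_block_iff_blk_eq hm (by omega) (by omega), mem_block_iff_blk_eq hm ha parent_pos]
      omega
    · rintro ⟨htb, hta⟩
      have h2 : 1 < t := lt_of_le_of_lt (Nat.mul_pos (by omega : 0 < b - 1) hm) (mem_Ioc.mp htb).1
      have ht : t ≤ n * m := (mem_Ioc.mp htb).2.trans (Nat.mul_le_mul_right m hbn)
      rw [mem_block_iff_blk_eq hm (by omega) h2.le] at htb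
      rw [mem_block_iff_blk_eq hm ha (f.one_le_pval h2 ht)] at hta
      exact ⟨⟨h2, ht⟩, .inr ⟨htb, hta⟩⟩
  rw [mult, edges, natCast_card_filter]
  rfl

theorem hit_block_eq_zero {N j : ℕ} (f : ParentSeq N) (hj : j ≤ (a - 1) * m + 1) :
    f.hit (block m a) j = 0 := by
  have := f.pval_le_sub_one j
  exact if_neg fun h => by have := (mem_Ioc.mp h).1; omega

theorem sum_hit_Icc_eq_sum_hit_block {N : ℕ} (f : ParentSeq N) :
    ∑ j ∈ Icc 2 (a * m), f.hit (block m a) j = ∑ j ∈ block m a, f.hit (block m a) j := by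
  refine sum_congr_of_eq_on_inter (fun j hj hjB => ?_) (fun j hjB hj => ?_) fun _ _ _ => rfl
  all_goals
    refine hit_block_eq_zero f ?_
    simp only [block, mem_Icc, mem_Ioc] at hj hjB
    omega

theorem weight_block_eq {N : ℕ} (f : ParentSeq N) (β : ℝ) (ha : 1 ≤ a) :
    f.weight β (block m a) (a * m) = ∑ j ∈ block m a, f.hit (block m a) j +
      #{i ∈ block m a | 2 ≤ i} + β * m := by
  rw [f.weight_eq_sum_hit, sum_hit_Icc_eq_sum_hit_block, card_block ha]

theorem weight_block_le (hβ : 0 ≤ β) {N t : ℕ} (f : ParentSeq N) (ha : 1 ≤ a) (ht : t ≤ a * m) :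
    f.weight β (block m a) t ≤ m * (2 + β) := by
  have hits : ∑ j ∈ block m a, f.hit (block m a) j ≤ m := by
    simpa [card_block ha] using
      sum_le_card_nsmul (block m a) _ 1 fun j _ => f.hit_le_one (block m a) j
  have nonroot : (#{i ∈ block m a | 2 ≤ i} : ℝ) ≤ m := by
    exact_mod_cast (card_filter_le _ _).trans (card_block ha).le
  have := f.weight_mono hβ (subset_refl (block m a)) ht
  rw [weight_block_eq f β ha] at this
  linarith

theorem abs_card_filter_block_sub_le (ha : 1 ≤ a) :
    |(#{i ∈ block m a | 2 ≤ i} : ℝ) - m| ≤ 1 / a := by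
  obtain rfl | ha := ha.eq_or_lt
  · have nonroot : {i ∈ block m 1 | 2 ≤ i} = Ioc 1 m := by
      ext i
      simp only [block, mem_filter, mem_Ioc]
      omega
    rw [nonroot, Nat.card_Ioc]
    cases m <;> simp
  · have nonroot : ∀ i ∈ block m a, 2 ≤ i := fun i hi => by
      obtain ⟨hlt, hle⟩ := mem_Ioc.mp hi
      have hm : m ≠ 0 := fun h => by simp [h] at hlt hle; omega
      have := Nat.mul_pos (by omega : 0 < a - 1) (Nat.pos_of_ne_zero hm)
      omega
    rw [filter_true_of_mem nonroot, card_block ha.le, sub_self, abs_zero]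
    positivity

theorem abs_weight_block_sub_le {N : ℕ} (f : ParentSeq N) (β : ℝ) (ha : 1 ≤ a) :
    |f.weight β (block m a) (a * m) - m * (1 + β)| ≤
      ∑ j ∈ block m a, f.hit (block m a) j + 1 / a := by
  have hits : 0 ≤ ∑ j ∈ block m a, f.hit (block m a) j :=
    sum_nonneg fun j _ => f.hit_nonneg (block m a) j
  have root := abs_card_filter_block_sub_le (m := m) ha
  rw [weight_block_eq f β ha, abs_le]
  rw [abs_le] at root
  constructor <;> linarith

theorem moriE_hit_block_le (hβ : 0 < β) (ha : 1 ≤ a) {j : ℕ} (hj : j ∈ block m a) :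
    moriE (a * m) β (fun f => f.hit (block m a) j) ≤ m * (2 + β) / β / a := by
  obtain hj' | hj' := le_or_gt j ((a - 1) * m + 1)
  · simp only [hit_block_eq_zero _ hj', moriE, mul_zero, sum_const_zero]
    positivity
  obtain ⟨hlt, hle⟩ := mem_Ioc.mp hj
  obtain ⟨N, rfl⟩ := Nat.exists_eq_add_of_le' (by omega : 1 ≤ j)
  have hm : 1 ≤ m := Nat.pos_of_ne_zero fun h => by simp [h] at hle
  have haN : a ≤ N := by
    have := Nat.le_mul_of_pos_right (a - 1) hm
    omega
  have hN : 1 ≤ N := ha.trans haN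
  have : (0 : ℝ) < a := by exact_mod_cast ha
  have total : β * a ≤ totalWeight β N :=
    (mul_le_mul_of_nonneg_left (by exact_mod_cast haN) hβ.le).trans (mul_le_totalWeight β hN)
  calc moriE (a * m) β (fun f => f.hit (block m a) (N + 1))
      = moriE N β fun f => f.weight β (block m a ∩ Icc 1 N) N / totalWeight β N := by
        rw [moriE_eq_of_le hβ N.succ_pos hle (X := fun _ f => f.hit (block m a) (N + 1))
          fun L hL f i => f.hit_snoc_of_le i _ hL, moriE_hit_last hβ _ hN]
    _ ≤ moriE N β fun _ => m * (2 + β) / (β * a) := moriE_mono hβ.le fun f =>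
        div_le_div₀ (by positivity) ((f.weight_mono hβ.le inter_subset_left le_rfl).trans
          (weight_block_le hβ.le f ha (by omega))) (by positivity) total
    _ = m * (2 + β) / β / a := by rw [moriE_const hβ hN, div_div]

theorem exists_abs_risingMoment_block_sub_le (hβ : 0 < β) (hm : 1 ≤ m) :
    ∃ C > 0, ∀ a : ℕ, 1 ≤ a →
      |risingMoment β (block m a) (a * m) - m * (1 + β) * (m * (1 + β) + 1)| ≤ C / a := by
  let w : ℝ := m * (2 + β) + m * (1 + β) + 1
  refine ⟨w * (m * (m * (2 + β) / β) + 1), by positivity, fun a ha => ?_⟩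
  have deviation (f : ParentSeq (a * m)) :
      |f.weight β (block m a) (a * m) * (f.weight β (block m a) (a * m) + 1) -
          m * (1 + β) * (m * (1 + β) + 1)| ≤
        w * (∑ j ∈ block m a, f.hit (block m a) j + 1 / a) := by
    have weight_nonneg : 0 ≤ f.weight β (block m a) (a * m) := sum_nonneg fun _ _ => by positivity
    have weight_le := weight_block_le hβ.le f ha (le_refl (a * m))
    rw [show ∀ x y : ℝ, x * (x + 1) - y * (y + 1) = (x + y + 1) * (x - y) by intros; ring, abs_mul,
      abs_of_nonneg (by positivity)]
    exact mul_le_mul (by linarith) (abs_weight_block_sub_le f β ha) (abs_nonneg _) (by positivity)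
  refine (abs_moriE_sub_le hβ (Nat.mul_pos ha hm) deviation).trans ?_
  rw [moriE_const_mul, moriE_add, moriE_sum, moriE_const hβ (Nat.mul_pos ha hm), mul_div_assoc,
    add_div, mul_div_assoc]
  gcongr
  simpa [card_block ha] using
    sum_le_card_nsmul (block m a) _ _ fun j hj => moriE_hit_block_le hβ ha hj

theorem le_risingMoment (hβ : 0 < β) {t : ℕ} (ht : 1 ≤ t) (A : Finset ℕ) :
    β * #A * (β * #A + 1) ≤ risingMoment β A t := by
  rw [← moriE_const hβ ht (β * #A * (β * #A + 1))]
  refine moriE_mono hβ.le fun f => ?_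
  have := f.mul_card_le_weight β A t
  gcongr
  exact sum_nonneg fun _ _ => by positivity

theorem risingMoment_pos (hβ : 0 < β) {t : ℕ} (ht : 1 ≤ t) {A : Finset ℕ} (hA : A.Nonempty) :
    0 < risingMoment β A t := by
  have : 0 < #A := hA.card_pos
  exact lt_of_lt_of_le (by positivity) (le_risingMoment hβ ht A)

theorem exists_abs_log_risingMoment_block_sub_le (hβ : 0 < β) (hm : 1 ≤ m) :
    ∃ C > 0, ∀ a : ℕ, 1 ≤ a → |Real.log (risingMoment β (block m a) (a * m)) -
      Real.log (m * (1 + β) * (m * (1 + β) + 1))| ≤ C / a := by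
  obtain ⟨C, hC, moment_le⟩ := exists_abs_risingMoment_block_sub_le hβ hm
  have hm0 : (0 : ℝ) < m := by exact_mod_cast hm
  refine ⟨C / (β * m * (β * m + 1)), by positivity, fun a ha => ?_⟩
  have lower := le_risingMoment hβ (Nat.mul_pos ha hm) (block m a)
  rw [card_block ha] at lower
  rw [div_right_comm]
  refine (abs_log_sub_log_le (by positivity) lower ?_).trans ?_
  · have : β * m ≤ m * (1 + β) := by linarith
    gcongr
  · gcongr
    exact moment_le a ha

theorem abs_log_sub_log_block_le (hm : 1 ≤ m) (ha : 1 ≤ a) {b N : ℕ} (hab : a < b)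
    (hN : N + 1 ∈ block m b) : |Real.log N - (Real.log b + Real.log m)| ≤ 1 / a := by
  have hm0 : (0 : ℝ) < m := by exact_mod_cast hm
  have ha0 : (0 : ℝ) < a := by exact_mod_cast ha
  have hb : (a : ℝ) ≤ b := by exact_mod_cast hab.le
  have am_le_bm : (a : ℝ) * m ≤ b * m := by gcongr
  have am_le : (a : ℝ) * m ≤ N := by exact_mod_cast mul_le_of_succ_mem_block hab hN
  have le_bm : (N : ℝ) ≤ b * m := by exact_mod_cast (Nat.le_succ N).trans (mem_Ioc.mp hN).2
  have bm_le : (b : ℝ) * m ≤ N + m := by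
    have := mul_le_of_succ_mem_block (Nat.sub_one_lt_of_lt hab) hN
    rw [Nat.sub_mul, one_mul, Nat.sub_le_iff_le_add] at this
    exact_mod_cast this
  rw [← Real.log_mul (ha0.trans_le hb).ne' hm0.ne']
  refine (abs_log_sub_log_le (by positivity) am_le am_le_bm).trans ?_
  rw [div_le_div_iff₀ (by positivity) ha0, one_mul, mul_comm (a : ℝ)]
  gcongr
  exact abs_le.mpr ⟨by linarith, by linarith⟩

theorem abs_log_pairScale_block_sub_le (hβ : 0 < β) (hm : 1 ≤ m) (ha : 1 ≤ a) {b c N M : ℕ}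
    (hab : a < b) (hac : a < c) (hN : N + 1 ∈ block m b) (hM : M + 1 ∈ block m c) :
    |Real.log (pairScale β (a * m : ℕ) N M) -
      (Real.log (pairScale β a b c) - 2 * Real.log m)| ≤ 2 / a := by
  have ha0 : (0 : ℝ) < a := by exact_mod_cast ha
  have hm0 : (0 : ℝ) < m := by exact_mod_cast hm
  have am_pos : 0 < a * m := Nat.mul_pos ha hm
  have hN0 : (0 : ℝ) < N := by exact_mod_cast am_pos.trans_le (mul_le_of_succ_mem_block hab hN)
  have hM0 : (0 : ℝ) < M := by exact_mod_cast am_pos.trans_le (mul_le_of_succ_mem_block hac hM)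
  have hb0 : (0 : ℝ) < b := by exact_mod_cast ha.trans hab.le
  have hc0 : (0 : ℝ) < c := by exact_mod_cast ha.trans hac.le
  have log_N := abs_log_sub_log_block_le hm ha hab hN
  have log_M := abs_log_sub_log_block_le hm ha hac hM
  have exponent : |1 / (2 + β) - 1| ≤ 1 := by
    have : 1 / (2 + β) ≤ 1 := (div_le_one (by positivity)).mpr (by linarith)
    have : 0 ≤ 1 / (2 + β) := by positivity
    exact abs_le.mpr ⟨by linarith, by linarith⟩
  push_cast
  rw [log_pairScale hβ (by positivity) hN0 hM0, log_pairScale hβ ha0 hb0 hc0,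
    Real.log_mul ha0.ne' hm0.ne']
  calc _ = |(1 / (2 + β) - 1) * ((Real.log N - (Real.log b + Real.log m)) +
        (Real.log M - (Real.log c + Real.log m)))| := by congr 1; ring
    _ ≤ 1 * (1 / a + 1 / a) := by
        rw [abs_mul]
        exact mul_le_mul exponent ((abs_add_le _ _).trans (add_le_add log_N log_M)) (abs_nonneg _)
          zero_le_one
    _ = 2 / a := by ring

/-- The leading order of the probability that given tree vertices of `u_b` and `u_c` both attach
to `u_a`. The coefficient is the value of `Y(Y+1)` for the weight `Y = m(1+β)` of a block that has
no internal edges, over the squared density `m(2+β)` of the attachment weight. -/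
noncomputable def hitPairLimit (β : ℝ) (m a b c : ℕ) : ℝ :=
  m * (1 + β) * (m * (1 + β) + 1) / (m * (2 + β)) ^ 2 * pairScale β a b c

theorem hitPairLimit_pos (hβ : 0 < β) (hm : 1 ≤ m) {b c : ℕ} (ha : 1 ≤ a) (hb : 1 ≤ b)
    (hc : 1 ≤ c) : 0 < hitPairLimit β m a b c := by
  have := pairScale_pos (β := β) (Nat.cast_pos.mpr ha) (Nat.cast_pos.mpr hb) (Nat.cast_pos.mpr hc)
  unfold hitPairLimit
  positivity

theorem log_hitPairLimit (hβ : 0 < β) (hm : 1 ≤ m) {b c : ℕ} (ha : 1 ≤ a) (hb : 1 ≤ b)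
    (hc : 1 ≤ c) : Real.log (hitPairLimit β m a b c) =
      Real.log (m * (1 + β) * (m * (1 + β) + 1)) - 2 * (Real.log m + Real.log (2 + β)) +
        Real.log (pairScale β a b c) := by
  have hm0 : (m : ℝ) ≠ 0 := Nat.cast_ne_zero.mpr (by omega)
  have scale_pos :=
    pairScale_pos (β := β) (Nat.cast_pos.mpr ha) (Nat.cast_pos.mpr hb) (Nat.cast_pos.mpr hc)
  rw [hitPairLimit, Real.log_mul (by positivity) scale_pos.ne',
    Real.log_div (by positivity) (by positivity), Real.log_pow, Real.log_mul hm0 (by positivity)]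
  push_cast
  ring

theorem exists_abs_log_risingMoment_mul_pairFactor_sub_le (hβ : 0 < β) (hm : 1 ≤ m) :
    ∃ C > 0, ∀ a b c N M : ℕ, 1 ≤ a → a < b → b < c → N + 1 ∈ block m b → M + 1 ∈ block m c →
      |Real.log (risingMoment β (block m a) (a * m) * pairFactor β (a * m) N M) -
        Real.log (hitPairLimit β m a b c)| ≤ C / a := by
  obtain ⟨C₁, hC₁, log_moment⟩ := exists_abs_log_risingMoment_block_sub_le hβ hm
  obtain ⟨C₂, hC₂, log_factor⟩ := exists_abs_log_pairFactor_sub_le hβ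
  refine ⟨C₁ + C₂ + 2, by positivity, fun a b c N M ha hab hbc hN hM => ?_⟩
  have am_pos : 1 ≤ a * m := Nat.mul_pos ha hm
  have am_le : a * m ≤ N := mul_le_of_succ_mem_block hab hN
  have hNM : N < M := (mem_Ioc.mp hN).2.trans (mul_le_of_succ_mem_block hbc hM)
  have block_nonempty : (block m a).Nonempty := card_pos.mp (by rwa [card_block ha])
  have moment := log_moment a ha
  have factor := log_factor (a * m) N M am_pos am_le hNM
  have scale := abs_log_pairScale_block_sub_le hβ hm ha hab (hab.trans hbc) hN hM
  have factor_error : C₂ / (a * m : ℕ) ≤ C₂ / a :=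
    div_le_div_of_nonneg_left hC₂.le (by exact_mod_cast ha)
      (by exact_mod_cast Nat.le_mul_of_pos_right a hm)
  rw [Real.log_mul (risingMoment_pos hβ am_pos block_nonempty).ne'
    (pairFactor_pos hβ am_pos am_le hNM).ne', log_hitPairLimit hβ hm ha (by omega) (by omega),
    add_div, add_div]
  rw [abs_le] at *
  constructor <;> linarith

theorem exists_abs_moriE_hit_mul_hit_sub_le (hβ : 0 < β) (hm : 1 ≤ m) :
    ∃ K > 0, ∀ n a b c i j : ℕ, 1 ≤ a → a < b → b < c → c ≤ n → i ∈ block m b → j ∈ block m c →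
      |moriE (n * m) β (fun f => f.hit (block m a) i * f.hit (block m a) j) -
        hitPairLimit β m a b c| ≤ K / a * hitPairLimit β m a b c := by
  obtain ⟨C, hC, log_le⟩ := exists_abs_log_risingMoment_mul_pairFactor_sub_le hβ hm
  refine ⟨C * Real.exp C, by positivity, fun n a b c i j ha hab hbc hcn hi hj => ?_⟩
  obtain ⟨N, rfl⟩ := Nat.exists_eq_add_of_le' (mem_Icc.mp (block_subset_Icc hi)).1
  obtain ⟨M, rfl⟩ := Nat.exists_eq_add_of_le' (mem_Icc.mp (block_subset_Icc hj)).1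
  have am_pos : 1 ≤ a * m := Nat.mul_pos ha hm
  have am_le : a * m ≤ N := mul_le_of_succ_mem_block hab hi
  have hNM : N < M := (mem_Ioc.mp hi).2.trans (mul_le_of_succ_mem_block hbc hj)
  have hMn : M < n * m := (mem_Ioc.mp hj).2.trans (Nat.mul_le_mul_right m hcn)
  have block_nonempty : (block m a).Nonempty := card_pos.mp (by rwa [card_block ha])
  have limit_pos := hitPairLimit_pos hβ hm ha (by omega : 1 ≤ b) (by omega : 1 ≤ c)
  rw [moriE_hit_mul_hit hβ am_pos block_subset_Icc am_le hNM hMn]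
  refine (abs_sub_le_of_abs_log_sub_log_le
    (mul_pos (risingMoment_pos hβ am_pos block_nonempty) (pairFactor_pos hβ am_pos am_le hNM))
    limit_pos (log_le a b c N M ha hab hbc hi hj)).trans ?_
  rw [mul_div_right_comm C]
  gcongr
  exact div_le_self hC.le (by exact_mod_cast ha)

theorem exists_abs_moriE_mult_mul_mult_sub_le (hβ : 0 < β) (hm : 1 ≤ m) :
    ∃ K > 0, ∀ n a b c : ℕ, 1 ≤ a → a < b → b < c → c ≤ n →
      |moriE (n * m) β (fun f => (mult n m f a b : ℝ) * mult n m f a c) -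
        m ^ 2 * hitPairLimit β m a b c| ≤ K / a * (m ^ 2 * hitPairLimit β m a b c) := by
  obtain ⟨K, hK, hit_hit⟩ := exists_abs_moriE_hit_mul_hit_sub_le hβ hm
  refine ⟨K, hK, fun n a b c ha hab hbc hcn => ?_⟩
  have expand : moriE (n * m) β (fun f => (mult n m f a b : ℝ) * mult n m f a c) =
      ∑ i ∈ block m b, ∑ j ∈ block m c,
        moriE (n * m) β fun f => f.hit (block m a) i * f.hit (block m a) j := by
    simp only [← moriE_sum, ← sum_mul_sum]
    congr 1
    funext f
    rw [mult_eq_sum_hit hm f ha hab (by omega), mult_eq_sum_hit hm f ha (by omega) hcn]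
  have total : m ^ 2 * hitPairLimit β m a b c =
      ∑ _i ∈ block m b, ∑ _j ∈ block m c, hitPairLimit β m a b c := by
    simp only [sum_const, card_block (by omega : 1 ≤ b), card_block (by omega : 1 ≤ c),
      nsmul_eq_mul]
    ring
  rw [expand, total]
  simp only [← sum_sub_distrib, mul_sum]
  refine (abs_sum_le_sum_abs _ _).trans (sum_le_sum fun i hi => ?_)
  refine (abs_sum_le_sum_abs _ _).trans (sum_le_sum fun j hj => ?_)
  exact hit_hit n a b c i j ha hab hbc hcn hi hj

end Blocks

theorem exists_eq_mul_one_add {x p ε : ℝ} (hp : 0 < p) (h : |x - p| ≤ ε * p) :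
    ∃ θ, |θ| ≤ ε ∧ x = p * (1 + θ) := by
  refine ⟨(x - p) / p, ?_, by field_simp; ring⟩
  rwa [abs_div, abs_of_pos hp, div_le_iff₀ hp]

end Mori

/-- Expected number of pairs `(v_b,v_a), (v_c,v_a)` of adjacent half-edges in `G^n_{m,β}`
(common vertex of smallest index). -/
theorem expected_adjacent_pairs_smallest_index (β : ℝ) (hβ : 0 < β) (m : ℕ) (hm : 1 ≤ m) :
    ∃ K : ℝ, 0 < K ∧ ∀ n : ℕ, 1 ≤ n → ∀ a b c : ℕ, 1 ≤ a → a < b → b < c → c ≤ n →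
      ∃ θ : ℝ, |θ| ≤ K / (a : ℝ) ∧
        moriE (n * m) β (fun f => (mult n m f a b : ℝ) * (mult n m f a c : ℝ)) =
          ((m : ℝ) * (1 + β) / (2 + β)
              + (m : ℝ) * ((m : ℝ) - 1) * (1 + β) ^ 2 / (2 + β) ^ 2)
            * ((a : ℝ) ^ 2 * (b : ℝ) ^ (1 + β) * (c : ℝ) ^ (1 + β)) ^ (-(1 / (2 + β)))
            * (1 + θ) := by
  obtain ⟨K, hK, mult_mult⟩ := Mori.exists_abs_moriE_mult_mul_mult_sub_le hβ hm
  refine ⟨K, hK, fun n _ a b c ha hab hbc hcn => ?_⟩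
  have limit_pos := Mori.hitPairLimit_pos hβ hm ha (by omega : 1 ≤ b) (by omega : 1 ≤ c)
  have leading : ((m : ℝ) * (1 + β) / (2 + β) + m * (m - 1) * (1 + β) ^ 2 / (2 + β) ^ 2) *
      (a ^ 2 * b ^ (1 + β) * c ^ (1 + β)) ^ (-(1 / (2 + β))) =
        m ^ 2 * Mori.hitPairLimit β m a b c := by
    rw [Mori.hitPairLimit, Mori.pairScale]
    field_simp
    ring
  rw [leading]
  exact Mori.exists_eq_mul_one_add (by positivity) (mult_mult n a b c ha hab hbc hcn)
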